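/- Let v = (v_1,...,v_k) be a centered Gaussian vector with covariance matrix (ρ_ij) and u = (u_1,...,u_k) a centered Gaussian vector with covariance matrix (ξ_ij), where ρ_ii = ξ_ii = 1 for all i. If ρ_ij ≥ ξ_ij for all i,j, then for any constants c_1,...,c_k, Pr(v_1 > c_1, ..., v_k > c_k) ≥ Pr(u_1 > c_1, ..., u_k > c_k). (Slepian's inequality.) -/

import Mathlib

/-!
Slepian's inequality follows from a comparison of `∫ F dμu` with `∫ F dμv` for smooth `F` whose
mixed second derivatives `∂ᵢ∂ⱼF`, `i ≠ j`, are nonnegative. The indicator of the orthant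
`{x | ∀ i, c i < x i}` is the pointwise limit of such functions, namely products of increasing
smooth cutoffs of the single coordinates, and dominated convergence passes to the limit.

For smooth `F` the comparison is a Lindeberg swapping argument, which replaces the usual Gaussian
interpolation and avoids integration by parts. A centered Gaussian law is infinitely divisible:
the laws of `√t • v` form a convolution semigroup (`IsCenteredGaussian.scaleLaw_add`), so `u` is a
sum of `n` independent copies of `u / √n`, which can be exchanged one at a time for copies of
`v / √n`. By Taylor's formula, a perturbation `√ε • y` with `y` centered Gaussian of covariance `C`
changes the expectation of `F` at `w` by `ε / 2 * ∑ i j, ∂ᵢ∂ⱼF(w) * C i j + O(ε ^ (3 / 2))`.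
The diagonal terms agree for `u` and `v`, and the off-diagonal ones are ordered, so each swap loses
at most `O(n ^ (-3 / 2))` (`slepian_step`) and all `n` of them at most `O(n ^ (-1 / 2))`, which
tends to `0` (`slepian_smooth`).
-/

open MeasureTheory ProbabilityTheory

/-- A probability measure on `ℝ^k` is centered Gaussian with covariance matrix `C` if every
linear functional pushes it forward to a one-dimensional centered Gaussian with the
corresponding variance. -/
def IsCenteredGaussian {k : ℕ} (μ : Measure (Fin k → ℝ)) (C : Matrix (Fin k) (Fin k) ℝ) : Prop :=
  IsProbabilityMeasure μ ∧ ∀ a : Fin k → ℝ,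
    μ.map (fun x => ∑ i, a i * x i) =
      gaussianReal 0 (∑ i, ∑ j, a i * C i j * a j).toNNReal

/-! ### Second-order expansion of products -/

/-- Taylor's formula on `[0, 1]` with a (non-optimal) bound on the cubic remainder. -/
lemma taylor_two_bound {g : ℝ → ℝ} (hg : ContDiff ℝ 3 g) {M : ℝ}
    (hM : ∀ s, |iteratedDeriv 3 g s| ≤ M) :
    |g 1 - (g 0 + deriv g 0 + 1 / 2 * deriv (deriv g) 0)| ≤ M := by
  have h01 : (0 : ℝ) ≠ 1 := zero_ne_one
  obtain ⟨x', -, hx'⟩ := taylor_mean_remainder_lagrange_iteratedDeriv (n := 2) h01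
    (f := g) (by exact_mod_cast hg.contDiffOn)
  have hU : UniqueDiffOn ℝ (Set.uIcc (0 : ℝ) 1) := uniqueDiffOn_uIcc h01
  have h1 : iteratedDerivWithin 1 g (Set.uIcc 0 1) 0 = deriv g 0 := by
    rw [iteratedDerivWithin_eq_iteratedDeriv hU (hg.of_le (by norm_num)).contDiffAt (by simp),
      iteratedDeriv_one]
  have h2 : iteratedDerivWithin 2 g (Set.uIcc 0 1) 0 = deriv (deriv g) 0 := by
    rw [iteratedDerivWithin_eq_iteratedDeriv hU (hg.of_le (by norm_num)).contDiffAt (by simp),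
      iteratedDeriv_succ, iteratedDeriv_one]
  rw [taylorWithinEval_succ, taylorWithinEval_succ, taylor_within_zero_eval] at hx'
  norm_num at h1 h2 hx'
  rw [h1, h2] at hx'
  rw [hx', abs_div]
  have h0 := hM x'
  rw [abs_of_pos (by norm_num : (0 : ℝ) < 6)]
  have := abs_nonneg (iteratedDeriv 3 g x')
  linarith

/-- Along every line `s ↦ w + s • y`, the third derivative of `∏ i, f i` is `O(‖y‖ ^ 3)`, uniformly
in `w`. -/
lemma iteratedDeriv_three_prod_bound {k : ℕ} (f : Fin k → ℝ → ℝ) (hf : ∀ i, ContDiff ℝ 3 (f i))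
    (B : Fin k → ℕ → ℝ) (hB : ∀ i, ∀ m ≤ 3, ∀ x, |iteratedDeriv m (f i) x| ≤ B i m) :
    ∃ K : ℝ, ∀ (w y : Fin k → ℝ) (s : ℝ),
      |iteratedDeriv 3 (fun s => ∏ i, f i (w i + s * y i)) s| ≤ K * ‖y‖ ^ 3 := by
  refine ⟨∑ p ∈ (Finset.univ : Finset (Fin k)).sym 3, (p : Multiset (Fin k)).countPerms *
    ∏ j, B j ((p : Multiset (Fin k)).count j), fun w y s => ?_⟩
  have hg : ∀ i, ContDiff ℝ 3 (fun s => f i (w i + s * y i)) := fun i =>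
    (hf i).comp (by fun_prop)
  rw [← Real.norm_eq_abs, ← norm_iteratedFDeriv_eq_norm_iteratedDeriv]
  refine (norm_iteratedFDeriv_prod_le (N := 3) (fun i _ => hg i) (by norm_num)).trans ?_
  rw [Finset.sum_mul]
  refine Finset.sum_le_sum fun p _ => ?_
  rw [mul_assoc]
  refine mul_le_mul_of_nonneg_left ?_ (by positivity)
  have hcard : ∑ j, (p : Multiset (Fin k)).count j = 3 := by
    rw [Multiset.sum_count_eq_card (fun a _ => Finset.mem_univ a)]; exact p.2
  have hpow : ‖y‖ ^ 3 = ∏ j, ‖y‖ ^ (p : Multiset (Fin k)).count j := by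
    rw [Finset.prod_pow_eq_pow_sum, hcard]
  rw [hpow, ← Finset.prod_mul_distrib]
  refine Finset.prod_le_prod (fun _ _ => norm_nonneg _) fun j _ => ?_
  set m := (p : Multiset (Fin k)).count j with hm
  have hm3 : m ≤ 3 := by
    rw [← hcard]
    exact Finset.single_le_sum (f := fun j => (p : Multiset (Fin k)).count j)
      (fun _ _ => Nat.zero_le _) (Finset.mem_univ j)
  rw [norm_iteratedFDeriv_eq_norm_iteratedDeriv]
  have h1 : iteratedDeriv m (fun s => f j (w j + s * y j)) =
      fun s => (y j) ^ m * iteratedDeriv m (f j) (w j + y j * s) := by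
    have := iteratedDeriv_comp_const_mul (n := m) (f := fun t => f j (w j + t))
      (((hf j).comp (by fun_prop : ContDiff ℝ 3 fun t => w j + t)).of_le (by exact_mod_cast hm3))
      (y j)
    simp only [iteratedDeriv_comp_const_add] at this
    rw [← this]
    simp only [mul_comm]
  rw [h1, Real.norm_eq_abs, abs_mul, abs_pow, mul_comm]
  have hy : |y j| ≤ ‖y‖ := norm_le_pi_norm y j
  exact mul_le_mul (hB j m hm3 _) (by gcongr) (by positivity)
    ((abs_nonneg _).trans (hB j m hm3 0))

/-- `F` has a second-order expansion `F w + D w · y + ½ H w (y, y)` at every point `w`, with an error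
bounded by `K * ‖y‖ ^ 3` uniformly in `w`, in which the off-diagonal coefficients of `H` are
nonnegative. For smooth `F` the last condition says that the mixed second derivatives are
nonnegative, which is the property behind Slepian's inequality. -/
def HasSlepianExpansion {k : ℕ} (F : (Fin k → ℝ) → ℝ) : Prop :=
  ∃ (K : ℝ) (D : (Fin k → ℝ) → Fin k → ℝ) (H : (Fin k → ℝ) → Fin k → Fin k → ℝ),
    (∀ w i j, i ≠ j → 0 ≤ H w i j) ∧
    ∀ w y, |F (w + y) - (F w + ∑ i, D w i * y i + 1 / 2 * ∑ i, ∑ j, H w i j * (y i * y j))|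
      ≤ K * ‖y‖ ^ 3

lemma hasSlepianExpansion_prod {k : ℕ} (f : Fin k → ℝ → ℝ) (hf : ∀ i, ContDiff ℝ 3 (f i))
    (B : Fin k → ℕ → ℝ) (hB : ∀ i, ∀ m ≤ 3, ∀ x, |iteratedDeriv m (f i) x| ≤ B i m)
    (h0 : ∀ i x, 0 ≤ f i x) (hmono : ∀ i, Monotone (f i)) :
    HasSlepianExpansion (fun x : Fin k → ℝ => ∏ i, f i (x i)) := by
  obtain ⟨K, hK⟩ := iteratedDeriv_three_prod_bound f hf B hB
  refine ⟨K, fun w i => (∏ j ∈ Finset.univ.erase i, f j (w j)) * deriv (f i) (w i),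
    fun w i j => if j = i then (∏ l ∈ Finset.univ.erase i, f l (w l)) * deriv (deriv (f i)) (w i)
      else (∏ l ∈ (Finset.univ.erase i).erase j, f l (w l)) * deriv (f j) (w j) *
        deriv (f i) (w i), ?_, ?_⟩
  · intro w i j hij
    simp only [if_neg hij.symm]
    exact mul_nonneg (mul_nonneg (Finset.prod_nonneg fun l _ => h0 l _) (hmono j).deriv_nonneg)
      (hmono i).deriv_nonneg
  · intro w y
    have hg : ContDiff ℝ 3 (fun s : ℝ => ∏ i, f i (w i + s * y i)) :=
      contDiff_prod fun i _ => (hf i).comp (by fun_prop)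
    have hlin : ∀ i s, HasDerivAt (fun s : ℝ => w i + s * y i) (y i) s := fun i s => by
      simpa using ((hasDerivAt_id s).mul_const (y i)).const_add (w i)
    have hd0 : ∀ i s, HasDerivAt (fun s : ℝ => f i (w i + s * y i))
        (deriv (f i) (w i + s * y i) * y i) s := fun i s =>
      (((hf i).differentiable (by norm_num)) _).hasDerivAt.comp s (hlin i s)
    have hdf : ∀ i, Differentiable ℝ (deriv (f i)) := fun i => by
      have : ContDiff ℝ (2 + 1) (f i) := by
        have := hf i; norm_num; exact this
      exact (contDiff_succ_iff_deriv.1 this).2.2.differentiable (by norm_num)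
    have hd1 : ∀ i s, HasDerivAt (fun s : ℝ => deriv (f i) (w i + s * y i) * y i)
        (deriv (deriv (f i)) (w i + s * y i) * y i * y i) s := fun i s =>
      ((hdf i _).hasDerivAt.comp s (hlin i s)).mul_const _
    have hder : deriv (fun s : ℝ => ∏ i, f i (w i + s * y i)) = fun s =>
        ∑ i, (∏ j ∈ Finset.univ.erase i, f j (w j + s * y j)) *
          (deriv (f i) (w i + s * y i) * y i) := by
      funext s
      exact (HasDerivAt.fun_finsetProd fun i _ => hd0 i s).deriv
    have hder2 := (HasDerivAt.fun_sum (u := Finset.univ) fun i (_ : i ∈ Finset.univ) =>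
      (HasDerivAt.fun_finsetProd (u := Finset.univ.erase i) fun j _ => hd0 j 0).fun_mul
        (hd1 i 0)).deriv
    have := taylor_two_bound hg (hK w y)
    rw [hder, hder2] at this
    simp only [zero_mul, add_zero, one_mul, smul_eq_mul] at this
    convert! this using 3
    congr 2
    · simp only [mul_assoc]
    · congr 1
      funext i
      rw [← Finset.sum_erase_add _ _ (Finset.mem_univ i), Finset.sum_mul]
      congr 1
      · refine Finset.sum_congr rfl fun j hj => ?_
        simp only [if_neg (Finset.ne_of_mem_erase hj)]
        ring
      · simp only [if_true]; ring

/-! ### Centered Gaussian laws -/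

/-- The law of `√t • X` when `X` has law `μ`. The parameter is the variance factor `t`, which makes
these laws a convolution semigroup in `t ≥ 0` for Gaussian `μ`. -/
noncomputable def scaleLaw {k : ℕ} (μ : Measure (Fin k → ℝ)) (t : ℝ) : Measure (Fin k → ℝ) :=
  μ.map (fun x => √t • x)

instance {k : ℕ} (μ : Measure (Fin k → ℝ)) [IsProbabilityMeasure μ] (t : ℝ) :
    IsProbabilityMeasure (scaleLaw μ t) :=
  Measure.isProbabilityMeasure_map (by fun_prop)

lemma dual_eq_sum {k : ℕ} (L : StrongDual ℝ (Fin k → ℝ)) :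
    (L : (Fin k → ℝ) → ℝ) = fun x => ∑ i, L (Pi.single i 1) * x i := by
  funext x
  conv_lhs => rw [pi_eq_sum_univ' x]
  simp [map_sum, mul_comm]

lemma IsCenteredGaussian.map_dual {k : ℕ} {μ : Measure (Fin k → ℝ)}
    {C : Matrix (Fin k) (Fin k) ℝ} (h : IsCenteredGaussian μ C) (L : StrongDual ℝ (Fin k → ℝ)) :
    ∃ V, μ.map L = gaussianReal 0 V :=
  ⟨_, by rw [dual_eq_sum L]; exact h.2 _⟩

lemma IsCenteredGaussian.isGaussian {k : ℕ} {μ : Measure (Fin k → ℝ)}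
    {C : Matrix (Fin k) (Fin k) ℝ} (h : IsCenteredGaussian μ C) : IsGaussian μ :=
  isGaussian_of_map_eq_gaussianReal fun L => ⟨0, h.map_dual L⟩

lemma IsCenteredGaussian.scaleLaw_add {k : ℕ} {μ : Measure (Fin k → ℝ)}
    {C : Matrix (Fin k) (Fin k) ℝ} (h : IsCenteredGaussian μ C) {p q : ℝ} (hp : 0 ≤ p)
    (hq : 0 ≤ q) : scaleLaw μ (p + q) = scaleLaw μ p ∗ scaleLaw μ q := by
  have := h.1
  apply Measure.ext_of_charFunDual
  funext L
  obtain ⟨V, hV⟩ := h.map_dual L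
  have key : ∀ t : ℝ, 0 ≤ t →
      charFunDual (scaleLaw μ t) L = Complex.exp (-(V * (t : ℂ) / 2)) := fun t ht => by
    have h1 : scaleLaw μ t = μ.map (√t • ContinuousLinearMap.id ℝ (Fin k → ℝ)) := rfl
    have h2 : L ∘SL (√t • ContinuousLinearMap.id ℝ (Fin k → ℝ)) = √t • L := by
      ext x; simp
    rw [h1, charFunDual_map, h2, ← charFun_map_eq_charFunDual_smul, hV, charFun_gaussianReal]
    have : ((√t : ℝ) : ℂ) ^ 2 = t := by rw [← Complex.ofReal_pow, Real.sq_sqrt ht]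
    rw [this]; simp
  rw [charFunDual_conv, key _ hp, key _ hq, key _ (add_nonneg hp hq), ← Complex.exp_add]
  congr 1
  push_cast; ring

lemma scaleLaw_one {k : ℕ} (μ : Measure (Fin k → ℝ)) : scaleLaw μ 1 = μ := by
  simp [scaleLaw]

lemma scaleLaw_zero {k : ℕ} (μ : Measure (Fin k → ℝ)) [IsProbabilityMeasure μ] :
    scaleLaw μ 0 = Measure.dirac 0 := by
  simp [scaleLaw]

section Moments

variable {k : ℕ} {μ : Measure (Fin k → ℝ)} {C : Matrix (Fin k) (Fin k) ℝ}

lemma IsCenteredGaussian.memLp_norm (h : IsCenteredGaussian μ C) (p : ℕ) :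
    MemLp (id : (Fin k → ℝ) → _) p μ := by
  have := h.isGaussian
  exact IsGaussian.memLp_id μ p (by simp)

lemma IsCenteredGaussian.integrable_norm_pow (h : IsCenteredGaussian μ C) (p : ℕ) :
    Integrable (fun x : Fin k → ℝ => ‖x‖ ^ p) μ := by
  have := h.1
  exact (h.memLp_norm p).integrable_norm_pow'

lemma IsCenteredGaussian.integrable_coord (h : IsCenteredGaussian μ C) (i : Fin k) :
    Integrable (fun x : Fin k → ℝ => x i) μ := by
  refine (h.integrable_norm_pow 1).mono' (measurable_pi_apply i).aestronglyMeasurable (.of_forall fun x => ?_)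
  simpa using norm_le_pi_norm x i

lemma IsCenteredGaussian.integrable_mul (h : IsCenteredGaussian μ C) (i j : Fin k) :
    Integrable (fun x : Fin k → ℝ => x i * x j) μ := by
  refine (h.integrable_norm_pow 2).mono' (by fun_prop) (.of_forall fun x => ?_)
  rw [norm_mul, sq]
  gcongr <;> exact norm_le_pi_norm x _

/-- The `max` is the truncation by `Real.toNNReal` in `IsCenteredGaussian`: positive
semidefiniteness of `C` is not part of the definition. -/
lemma IsCenteredGaussian.integral_linear_sq (h : IsCenteredGaussian μ C) (a : Fin k → ℝ) :
    ∫ x, (∑ i, a i * x i) ^ 2 ∂μ = max (∑ i, ∑ j, a i * C i j * a j) 0 := by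
  have h1 : ∫ x, (∑ i, a i * x i) ^ 2 ∂μ = ∫ t, t ^ 2 ∂(μ.map (fun x => ∑ i, a i * x i)) := by
    rw [integral_map (Measurable.aemeasurable (by fun_prop)) (by fun_prop)]
  rw [h1, h.2 a]
  have := variance_id_gaussianReal (μ := 0) (v := (∑ i, ∑ j, a i * C i j * a j).toNNReal)
  rw [variance_of_integral_eq_zero (by fun_prop) (by simp)] at this
  simpa using this

lemma IsCenteredGaussian.integral_coord (h : IsCenteredGaussian μ C) (i : Fin k) :
    ∫ x, x i ∂μ = 0 := by
  have h1 : ∫ x, x i ∂μ = ∫ t, t ∂(μ.map (fun x => ∑ j, (Pi.single i 1 : Fin k → ℝ) j * x j)) := by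
    rw [integral_map (Measurable.aemeasurable (by fun_prop)) (by fun_prop)]
    simp [Pi.single_apply]
  rw [h1, h.2, integral_id_gaussianReal]

lemma quad_single_add (C : Matrix (Fin k) (Fin k) ℝ) (i j : Fin k) (s : ℝ) :
    ∑ a, ∑ b, (Pi.single i 1 + s • Pi.single j 1 : Fin k → ℝ) a * C a b *
      (Pi.single i 1 + s • Pi.single j 1 : Fin k → ℝ) b =
      C i i + s * (C i j + C j i) + s ^ 2 * C j j := by
  simp only [Pi.add_apply, Pi.smul_apply, smul_eq_mul, add_mul, mul_add, Finset.sum_add_distrib,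
    Pi.single_apply]
  simp
  ring

/-- The matrix in `IsCenteredGaussian` need not be symmetric, so it determines the covariance only
through its symmetric part. -/
lemma IsCenteredGaussian.integral_mul (h : IsCenteredGaussian μ C) (hC : ∀ i, C i i = 1)
    (i j : Fin k) : ∫ x, x i * x j ∂μ = (C i j + C j i) / 2 := by
  have key : ∀ s : ℝ, ∫ x, (x i + s * x j) ^ 2 ∂μ = max (1 + s * (C i j + C j i) + s ^ 2) 0 := by
    intro s
    have := h.integral_linear_sq (Pi.single i 1 + s • Pi.single j 1)
    rw [quad_single_add, hC, hC, mul_one] at this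
    rw [← this]
    congr 1
    funext x
    simp [add_mul, Finset.sum_add_distrib, Pi.single_apply]
  have exp : ∀ s : ℝ, ∫ x, (x i + s * x j) ^ 2 ∂μ =
      ∫ x, x i * x i ∂μ + s * 2 * ∫ x, x i * x j ∂μ + s ^ 2 * ∫ x, x j * x j ∂μ := by
    intro s
    rw [← integral_const_mul, ← integral_const_mul, ← integral_add, ← integral_add]
    · congr 1; funext x; ring
    · exact (h.integrable_mul i i).add ((h.integrable_mul i j).const_mul _)
    · exact (h.integrable_mul j j).const_mul _
    · exact h.integrable_mul i i
    · exact (h.integrable_mul i j).const_mul _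
  have hsq : ∀ l, ∫ x, x l * x l ∂μ = 1 := by
    intro l
    have := h.integral_linear_sq (Pi.single l 1 + (0 : ℝ) • Pi.single l 1)
    rw [quad_single_add, hC] at this
    simpa [Pi.single_apply, sq] using this
  -- Polarization with `s = 1` and `s = -1`. The two second moments sum to `4`, and so do the two
  -- untruncated quadratic forms; a negative form would force the other truncated one above `4`,
  -- so neither is truncated.
  have e1 := (exp 1).symm.trans (key 1)
  have e2 := (exp (-1)).symm.trans (key (-1))
  rw [hsq, hsq] at e1 e2
  rcases max_cases (1 + 1 * (C i j + C j i) + 1 ^ 2) 0 with ⟨m1, _⟩ | ⟨m1, _⟩ <;>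
  rcases max_cases (1 + -1 * (C i j + C j i) + (-1) ^ 2) 0 with ⟨m2, _⟩ | ⟨m2, _⟩ <;>
  rw [m1] at e1 <;> rw [m2] at e2 <;> linarith

end Moments

/-! ### The comparison for smooth functions -/

/-- One swap: under a Gaussian perturbation of variance `ε`, the expectations of `F` for the two
covariances agree to first order on the diagonal, and the off-diagonal first-order terms are ordered
because `H w i j ≥ 0`. The error bound is uniform in the base point `w`. -/
lemma slepian_step {k : ℕ} {ρ ξ : Matrix (Fin k) (Fin k) ℝ} {μv μu : Measure (Fin k → ℝ)}
    (hv : IsCenteredGaussian μv ρ) (hu : IsCenteredGaussian μu ξ)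
    (hdiag : ∀ i, ρ i i = 1 ∧ ξ i i = 1) (hle : ∀ i j, ξ i j ≤ ρ i j)
    {F : (Fin k → ℝ) → ℝ} (hF : Continuous F) {M : ℝ} (hM : ∀ x, |F x| ≤ M)
    (hexp : HasSlepianExpansion F) :
    ∃ K : ℝ, ∀ ε : ℝ, 0 ≤ ε → ∀ w,
      ∫ y, F (w + √ε • y) ∂μu ≤ ∫ y, F (w + √ε • y) ∂μv + K * √ε ^ 3 := by
  obtain ⟨K, D, H, hH, hK⟩ := hexp
  have := hv.1
  have := hu.1
  -- Integrating the expansion against a centered Gaussian kills the linear term and turns the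
  -- quadratic term into the (symmetrized) covariance.
  have main : ∀ (μ : Measure (Fin k → ℝ)) (C : Matrix (Fin k) (Fin k) ℝ)
      (h : IsCenteredGaussian μ C) (hC : ∀ i, C i i = 1) (ε : ℝ), 0 ≤ ε → ∀ w,
      |∫ y, F (w + √ε • y) ∂μ - (F w + ε / 2 * ∑ i, ∑ j, H w i j * ((C i j + C j i) / 2))| ≤
        K * √ε ^ 3 * ∫ y, ‖y‖ ^ 3 ∂μ := by
    intro μ C h hC ε hε w
    have := h.1
    have hint1 : Integrable (fun y => F (w + √ε • y)) μ :=
      Integrable.of_bound (by fun_prop) M (.of_forall fun y => hM _)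
    have hintD : Integrable (fun y : Fin k → ℝ => ∑ i, D w i * (√ε * y i)) μ :=
      integrable_finsetSum _ fun i _ => ((h.integrable_coord i).const_mul _).const_mul _
    have hintH : Integrable (fun y : Fin k → ℝ =>
        ∑ i, ∑ j, H w i j * (√ε * y i * (√ε * y j))) μ := by
      refine integrable_finsetSum _ fun i _ => integrable_finsetSum _ fun j _ => ?_
      refine (((h.integrable_mul i j).const_mul ε).const_mul (H w i j)).congr
        (.of_forall fun y => ?_)
      show H w i j * (ε * (y i * y j)) = H w i j * (√ε * y i * (√ε * y j))
      rw [mul_mul_mul_comm, Real.mul_self_sqrt hε]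
    have hlinI : Integrable (fun y : Fin k → ℝ => F w + ∑ i, D w i * (√ε * y i)) μ :=
      (integrable_const _).add hintD
    have hquadI : Integrable (fun y : Fin k → ℝ =>
        1 / 2 * ∑ i, ∑ j, H w i j * (√ε * y i * (√ε * y j))) μ := hintH.const_mul _
    have hDint : ∫ y : Fin k → ℝ, ∑ i, D w i * (√ε * y i) ∂μ = 0 := by
      rw [integral_finsetSum _ fun i _ => ((h.integrable_coord i).const_mul _).const_mul _]
      simp [integral_const_mul, h.integral_coord]
    have hHint : ∫ y : Fin k → ℝ, ∑ i, ∑ j, H w i j * (√ε * y i * (√ε * y j)) ∂μ =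
        ε * ∑ i, ∑ j, H w i j * ((C i j + C j i) / 2) := by
      have e : ∀ i j, ∀ y : Fin k → ℝ, H w i j * (√ε * y i * (√ε * y j)) =
          (ε * H w i j) * (y i * y j) := fun i j y => by
        rw [mul_mul_mul_comm, Real.mul_self_sqrt hε]; ring
      simp only [e]
      rw [integral_finsetSum _ fun i _ => integrable_finsetSum _ fun j _ =>
        (h.integrable_mul i j).const_mul _, Finset.mul_sum]
      refine Finset.sum_congr rfl fun i _ => ?_
      rw [integral_finsetSum _ fun j _ => (h.integrable_mul i j).const_mul _, Finset.mul_sum]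
      refine Finset.sum_congr rfl fun j _ => ?_
      rw [integral_const_mul, h.integral_mul hC, mul_assoc]
    have hpolyI : Integrable (fun y : Fin k → ℝ => F w + ∑ i, D w i * (√ε * y i) +
        1 / 2 * ∑ i, ∑ j, H w i j * (√ε * y i * (√ε * y j))) μ := hlinI.add hquadI
    have hpoly : ∫ y : Fin k → ℝ, (F w + ∑ i, D w i * (√ε * y i) +
        1 / 2 * ∑ i, ∑ j, H w i j * (√ε * y i * (√ε * y j))) ∂μ =
        F w + ε / 2 * ∑ i, ∑ j, H w i j * ((C i j + C j i) / 2) := by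
      rw [integral_add hlinI hquadI,
        integral_add (integrable_const _) hintD, integral_const_mul, hDint, hHint]
      simp
      ring
    rw [← hpoly, ← integral_sub hint1 hpolyI,
      ← integral_const_mul, ← Real.norm_eq_abs]
    refine norm_integral_le_of_norm_le ((h.integrable_norm_pow 3).const_mul _)
      (.of_forall fun y => ?_)
    have := hK w (√ε • y)
    rw [norm_smul, Real.norm_of_nonneg (Real.sqrt_nonneg ε), mul_pow, ← mul_assoc] at this
    simpa using this
  refine ⟨K * (∫ y, ‖y‖ ^ 3 ∂μv) + K * ∫ y, ‖y‖ ^ 3 ∂μu, fun ε hε w => ?_⟩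
  have h1 := abs_le.1 (main μv ρ hv (fun i => (hdiag i).1) ε hε w)
  have h2 := abs_le.1 (main μu ξ hu (fun i => (hdiag i).2) ε hε w)
  have hcmp : ∑ i, ∑ j, H w i j * ((ξ i j + ξ j i) / 2) ≤
      ∑ i, ∑ j, H w i j * ((ρ i j + ρ j i) / 2) := by
    refine Finset.sum_le_sum fun i _ => Finset.sum_le_sum fun j _ => ?_
    rcases eq_or_ne i j with rfl | hij
    · rw [(hdiag i).1, (hdiag i).2]
    · refine mul_le_mul_of_nonneg_left ?_ (hH w i j hij)
      linarith [hle i j, hle j i]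
  have := mul_le_mul_of_nonneg_left hcmp (by positivity : 0 ≤ ε / 2)
  nlinarith [h1.1, h1.2, h2.1, h2.2]

/-- Slepian's inequality for expectations of functions with a uniform expansion. -/
lemma slepian_smooth {k : ℕ} {ρ ξ : Matrix (Fin k) (Fin k) ℝ} {μv μu : Measure (Fin k → ℝ)}
    (hv : IsCenteredGaussian μv ρ) (hu : IsCenteredGaussian μu ξ)
    (hdiag : ∀ i, ρ i i = 1 ∧ ξ i i = 1) (hle : ∀ i j, ξ i j ≤ ρ i j)
    {F : (Fin k → ℝ) → ℝ} (hF : Continuous F) {M : ℝ} (hM : ∀ x, |F x| ≤ M)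
    (hexp : HasSlepianExpansion F) :
    ∫ x, F x ∂μu ≤ ∫ x, F x ∂μv := by
  obtain ⟨K, hK⟩ := slepian_step hv hu hdiag hle hF hM hexp
  have := hv.1
  have := hu.1
  have hFint : ∀ (μ : Measure (Fin k → ℝ)) [IsProbabilityMeasure μ], Integrable F μ :=
    fun μ _ => Integrable.of_bound (by fun_prop) M (.of_forall hM)
  have hscale : ∀ (μ ω : Measure (Fin k → ℝ)) [IsProbabilityMeasure μ] [IsProbabilityMeasure ω]
      (ε : ℝ), ∫ x, F x ∂(ω ∗ scaleLaw μ ε) = ∫ w, ∫ y, F (w + √ε • y) ∂μ ∂ω := by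
    intro μ ω _ _ ε
    rw [integral_conv (hFint _)]
    congr 1
    funext w
    rw [scaleLaw, integral_map (by fun_prop) (by fun_prop)]
  have hinner : ∀ (μ ω : Measure (Fin k → ℝ)) [IsProbabilityMeasure μ] [IsProbabilityMeasure ω]
      (ε : ℝ), Integrable (fun w => ∫ y, F (w + √ε • y) ∂μ) ω := by
    intro μ ω _ _ ε
    refine Integrable.of_bound (StronglyMeasurable.aestronglyMeasurable ?_) M
      (.of_forall fun w => ?_)
    · exact StronglyMeasurable.integral_prod_right
        (f := fun w y => F (w + √ε • y)) (Continuous.stronglyMeasurable (by fun_prop))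
    · refine (norm_integral_le_of_norm_le_const (.of_forall fun y => hM _)).trans ?_
      simp
  have hswap : ∀ (ω : Measure (Fin k → ℝ)) [IsProbabilityMeasure ω] (ε : ℝ), 0 ≤ ε →
      ∫ x, F x ∂(ω ∗ scaleLaw μu ε) ≤ ∫ x, F x ∂(ω ∗ scaleLaw μv ε) + K * √ε ^ 3 := by
    intro ω _ ε hε
    rw [hscale, hscale]
    calc ∫ w, ∫ y, F (w + √ε • y) ∂μu ∂ω
        ≤ ∫ w, (∫ y, F (w + √ε • y) ∂μv + K * √ε ^ 3) ∂ω :=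
          integral_mono (hinner _ _ _) ((hinner _ _ _).add (integrable_const _))
            fun w => hK ε hε w
      _ = _ := by
          rw [integral_add (hinner _ _ _) (integrable_const _)]
          simp
  -- `G p q` is the expectation of `F` at `√p • v + √q • u` for independent `v` and `u`.
  let G : ℝ → ℝ → ℝ := fun p q => ∫ x, F x ∂(scaleLaw μv p ∗ scaleLaw μu q)
  have hG : ∀ p q ε : ℝ, 0 ≤ p → 0 ≤ q → 0 ≤ ε →
      G p (q + ε) ≤ G (p + ε) q + K * √ε ^ 3 := by
    intro p q ε hp hq hε
    have e1 : scaleLaw μv p ∗ scaleLaw μu (q + ε) =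
        (scaleLaw μv p ∗ scaleLaw μu q) ∗ scaleLaw μu ε := by
      rw [hu.scaleLaw_add hq hε, Measure.conv_assoc]
    have e2 : scaleLaw μv (p + ε) ∗ scaleLaw μu q =
        (scaleLaw μv p ∗ scaleLaw μu q) ∗ scaleLaw μv ε := by
      rw [hv.scaleLaw_add hp hε, Measure.conv_assoc, Measure.conv_assoc,
        Measure.conv_comm (scaleLaw μv ε)]
    simp only [G, e1, e2]
    exact hswap _ ε hε
  have hN : ∀ (n : ℕ) (ε : ℝ), 0 ≤ ε → ∀ p q : ℝ, 0 ≤ p → 0 ≤ q →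
      G p (q + n * ε) ≤ G (p + n * ε) q + n * (K * √ε ^ 3) := by
    intro n ε hε
    induction n with
    | zero => intro p q _ _; simp
    | succ n ih =>
      intro p q hp hq
      have h1 := hG p (q + n * ε) ε hp (by positivity) hε
      have h2 := ih (p + ε) q (by positivity) hq
      have e1 : q + ((n + 1 : ℕ) : ℝ) * ε = q + n * ε + ε := by push_cast; ring
      have e2 : p + ((n + 1 : ℕ) : ℝ) * ε = p + ε + n * ε := by push_cast; ring
      rw [e1, e2]
      push_cast
      linarith
  have hG01 : G 0 1 = ∫ x, F x ∂μu := by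
    simp only [G, scaleLaw_one, scaleLaw_zero, Measure.dirac_zero_conv]
  have hG10 : G 1 0 = ∫ x, F x ∂μv := by
    simp only [G, scaleLaw_one, scaleLaw_zero, Measure.conv_dirac_zero]
  -- `n + 1` swaps of size `ε = 1 / (n + 1)` lose `(n + 1) * K * ε ^ (3 / 2) = K * √ε` in total.
  have hlim : ∀ n : ℕ, ∫ x, F x ∂μu ≤ ∫ x, F x ∂μv + K * √(1 / ((n : ℝ) + 1)) := by
    intro n
    have hn : (0 : ℝ) < (n : ℝ) + 1 := by positivity
    have := hN (n + 1) (1 / ((n : ℝ) + 1)) (by positivity) 0 0 le_rfl le_rfl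
    have e : ((n + 1 : ℕ) : ℝ) * (1 / ((n : ℝ) + 1)) = 1 := by push_cast; field_simp
    have e' : ((n + 1 : ℕ) : ℝ) * (K * √(1 / ((n : ℝ) + 1)) ^ 3) = K * √(1 / ((n : ℝ) + 1)) := by
      rw [pow_succ, Real.sq_sqrt (by positivity)]
      calc _ = (((n + 1 : ℕ) : ℝ) * (1 / ((n : ℝ) + 1))) * (K * √(1 / ((n : ℝ) + 1))) := by ring
        _ = _ := by rw [e, one_mul]
    rw [e, e', zero_add, hG01, hG10] at this
    exact this
  refine ge_of_tendsto' (x := Filter.atTop) (f := fun n : ℕ =>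
    ∫ x, F x ∂μv + K * √(1 / ((n : ℝ) + 1))) ?_ hlim
  have h0 := (Real.continuous_sqrt.tendsto 0).comp (tendsto_one_div_add_atTop_nhds_zero_nat (𝕜 := ℝ))
  simpa using ((h0.const_mul K).const_add (∫ x, F x ∂μv))

/-! ### Approximation of the orthant -/

lemma smoothTransition_iteratedDeriv_bound (m : ℕ) :
    ∃ B, ∀ x, |iteratedDeriv m Real.smoothTransition x| ≤ B := by
  have hcont : Continuous (iteratedDeriv m Real.smoothTransition) :=
    (Real.smoothTransition.contDiff (n := m)).continuous_iteratedDeriv' m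
  -- Any compact neighbourhood of `[0, 1]` works: outside it the function is locally constant.
  obtain ⟨B, hB⟩ := (isCompact_Icc (a := (-1 : ℝ)) (b := 2)).exists_bound_of_continuousOn
    hcont.continuousOn
  have hconst : ∀ (x c : ℝ), (∀ᶠ y in nhds x, Real.smoothTransition y = c) → |c| ≤ 1 →
      |iteratedDeriv m Real.smoothTransition x| ≤ 1 := by
    intro x c h hc
    have : Real.smoothTransition =ᶠ[nhds x] fun _ => c := h
    rw [this.iteratedDeriv_eq m, iteratedDeriv_const]
    split_ifs
    · exact hc
    · simp
  refine ⟨max B 1, fun x => ?_⟩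
  by_cases h1 : x < 0
  · refine (hconst x 0 ?_ (by simp)).trans (le_max_right _ _)
    filter_upwards [Iio_mem_nhds h1] with y hy
    exact Real.smoothTransition.zero_of_nonpos (le_of_lt hy)
  by_cases h2 : 1 < x
  · refine (hconst x 1 ?_ (by simp)).trans (le_max_right _ _)
    filter_upwards [Ioi_mem_nhds h2] with y hy
    exact Real.smoothTransition.one_of_one_le (le_of_lt hy)
  · push Not at h1 h2
    exact (hB x ⟨by linarith, by linarith⟩).trans (le_max_left _ _)

/-- A smooth approximation from below of the indicator of the open orthant `{x | ∀ i, c i < x i}`.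
The `i`-th factor vanishes exactly for `x i ≤ c i` (when `n ≠ 0`) and equals `1` as soon as
`c i + 1 / n ≤ x i`, so that the convergence as `n → ∞` is pointwise everywhere. -/
noncomputable def smoothOrthant {k : ℕ} (c : Fin k → ℝ) (n : ℕ) (x : Fin k → ℝ) : ℝ :=
  ∏ i, Real.smoothTransition (n * (x i - c i))

lemma continuous_smoothOrthant {k : ℕ} (c : Fin k → ℝ) (n : ℕ) :
    Continuous (smoothOrthant c n) :=
  continuous_finsetProd _ fun i _ => Real.smoothTransition.continuous.comp (by fun_prop)

lemma abs_smoothOrthant_le {k : ℕ} (c : Fin k → ℝ) (n : ℕ) (x : Fin k → ℝ) :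
    |smoothOrthant c n x| ≤ 1 := by
  rw [smoothOrthant, abs_of_nonneg (Finset.prod_nonneg fun i _ => Real.smoothTransition.nonneg _)]
  exact Finset.prod_le_one (fun i _ => Real.smoothTransition.nonneg _)
    fun i _ => Real.smoothTransition.le_one _

lemma hasSlepianExpansion_smoothOrthant {k : ℕ} (c : Fin k → ℝ) (n : ℕ) :
    HasSlepianExpansion (smoothOrthant c n) := by
  choose B hB using smoothTransition_iteratedDeriv_bound
  have hs : ∀ N : ℕ, ContDiff ℝ N Real.smoothTransition := fun N =>
    Real.smoothTransition.contDiff (n := N)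
  refine hasSlepianExpansion_prod (fun i t => Real.smoothTransition (n * (t - c i)))
    (fun i => (hs 3).comp (by fun_prop)) (fun i m => (n : ℝ) ^ m * B m) (fun i m _ x => ?_)
    (fun i x => Real.smoothTransition.nonneg _) fun i x y hxy => ?_
  · have h1 := iteratedDeriv_comp_const_mul (hs m) (n : ℝ)
    have h2 := iteratedDeriv_comp_add_const m (fun t => Real.smoothTransition (n * t)) (-c i)
    simp only [← sub_eq_add_neg] at h2
    rw [h2, h1, abs_mul, abs_of_nonneg (by positivity)]
    exact mul_le_mul_of_nonneg_left (hB m _) (by positivity)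
  · exact Real.smoothTransition.monotone (by gcongr)

lemma tendsto_smoothOrthant {k : ℕ} (c x : Fin k → ℝ) :
    Filter.Tendsto (fun n => smoothOrthant c n x) Filter.atTop
      (nhds (Set.indicator {x | ∀ i, c i < x i} (fun _ => (1 : ℝ)) x)) := by
  apply tendsto_const_nhds.congr'
  by_cases hx : ∀ i, c i < x i
  · rw [Set.indicator_of_mem (by exact hx)]
    have : ∀ᶠ n : ℕ in Filter.atTop, ∀ i, 1 ≤ (n : ℝ) * (x i - c i) := by
      rw [Filter.eventually_all]
      intro i
      exact (tendsto_natCast_atTop_atTop.atTop_mul_const (sub_pos.2 (hx i))).eventually_ge_atTop 1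
    filter_upwards [this] with n hn
    exact (Finset.prod_eq_one fun i _ => Real.smoothTransition.one_of_one_le (hn i)).symm
  · rw [Set.indicator_of_notMem (by exact hx)]
    push Not at hx
    obtain ⟨i, hi⟩ := hx
    refine .of_forall fun n => (Finset.prod_eq_zero (Finset.mem_univ i) ?_).symm
    exact Real.smoothTransition.zero_of_nonpos
      (mul_nonpos_of_nonneg_of_nonpos (by positivity) (by linarith))

lemma tendsto_integral_smoothOrthant {k : ℕ} (μ : Measure (Fin k → ℝ)) [IsProbabilityMeasure μ]
    (c : Fin k → ℝ) :
    Filter.Tendsto (fun n => ∫ x, smoothOrthant c n x ∂μ) Filter.atTop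
      (nhds (μ.real {x | ∀ i, c i < x i})) := by
  have hmeas : MeasurableSet {x : Fin k → ℝ | ∀ i, c i < x i} := by
    rw [Set.ofPred_forall]
    exact MeasurableSet.iInter fun i => measurableSet_lt measurable_const (measurable_pi_apply i)
  rw [← integral_indicator_one hmeas]
  exact tendsto_integral_of_dominated_convergence (fun _ => 1)
    (fun n => (continuous_smoothOrthant c n).aestronglyMeasurable) (integrable_const _)
    (fun n => .of_forall fun x => abs_smoothOrthant_le c n x)
    (.of_forall fun x => tendsto_smoothOrthant c x)

/-- Slepian's inequality: if `v ~ N(0, ρ)` and `u ~ N(0, ξ)` with unit diagonals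
and `ρ i j ≥ ξ i j` for all `i, j`, then for any constants `c`,
`Pr(∀ i, v i > c i) ≥ Pr(∀ i, u i > c i)`. -/
theorem stmt1 {k : ℕ} (ρ ξ : Matrix (Fin k) (Fin k) ℝ)
    (μv μu : Measure (Fin k → ℝ))
    (hv : IsCenteredGaussian μv ρ) (hu : IsCenteredGaussian μu ξ)
    (hdiag : ∀ i, ρ i i = 1 ∧ ξ i i = 1)
    (hle : ∀ i j, ξ i j ≤ ρ i j) (c : Fin k → ℝ) :
    μu {x | ∀ i, c i < x i} ≤ μv {x | ∀ i, c i < x i} := by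
  have := hv.1
  have := hu.1
  have key : μu.real {x | ∀ i, c i < x i} ≤ μv.real {x | ∀ i, c i < x i} :=
    le_of_tendsto_of_tendsto' (tendsto_integral_smoothOrthant μu c)
      (tendsto_integral_smoothOrthant μv c) fun n =>
      slepian_smooth hv hu hdiag hle (continuous_smoothOrthant c n) (abs_smoothOrthant_le c n)
        (hasSlepianExpansion_smoothOrthant c n)
  exact (ENNReal.toReal_le_toReal (measure_ne_top _ _) (measure_ne_top _ _)).1 key
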